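/- Let d ≥ 2, let r ≥ 0 and η be real, and let z ∈ {−1, +1}^{d−1}. Define θ ∈ ℝ^d by θ₁ = r cos η and θ_ℓ = r z_{ℓ−1} (sin η)/√(d−1) for ℓ = 2, …, d. Then for every x ∈ ℝ^d with ‖x‖₂ ≤ 1, one has r − ⟨x, θ⟩ ≥ (r/2) ∑_{ℓ=2}^d ((sin η)/√(d−1) − z_{ℓ−1} x_ℓ)². -/

import Mathlib

open scoped RealInnerProductSpace

/-! The vector `θ` is `r • D u`, where `u = (cos η, sin η / √n, …, sin η / √n)` lies in the unit
ball and `D = diag(1, z)` is a self-adjoint contraction. Hence `⟪x, θ⟫ = r * ⟪D x, u⟫`, and since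
`D x` and `u` both lie in the unit ball, expanding the square gives
`‖u - D x‖² ≤ 2 * (1 - ⟪D x, u⟫)`.
The sum in the theorem is `‖u - D x‖²` without its first coordinate. -/

lemma norm_sub_sq_le_two_mul_one_sub_inner {E : Type*} [NormedAddCommGroup E]
    [InnerProductSpace ℝ E] {u y : E} (hu : ‖u‖ ≤ 1) (hy : ‖y‖ ≤ 1) :
    ‖u - y‖ ^ 2 ≤ 2 * (1 - ⟪y, u⟫) := by
  have hu_sq : ‖u‖ ^ 2 ≤ 1 := pow_le_one₀ (norm_nonneg u) hu
  have hy_sq : ‖y‖ ^ 2 ≤ 1 := pow_le_one₀ (norm_nonneg y) hy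
  rw [norm_sub_sq_real, real_inner_comm]
  linarith

lemma sum_succ_sq_le_norm_sq {n : ℕ} (v : EuclideanSpace ℝ (Fin (n + 1))) :
    ∑ j : Fin n, v j.succ ^ 2 ≤ ‖v‖ ^ 2 := by
  rw [EuclideanSpace.real_norm_sq_eq, Fin.sum_univ_succ]
  exact le_add_of_nonneg_left (sq_nonneg _)

section DiagScale

variable {ι : Type*}

/-- The diagonal operator with entries `w`, acting on a Euclidean space. -/
def diagScale (w : ι → ℝ) (x : EuclideanSpace ℝ ι) : EuclideanSpace ℝ ι :=
  WithLp.toLp 2 fun i => w i * x i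

@[simp]
lemma diagScale_apply (w : ι → ℝ) (x : EuclideanSpace ℝ ι) (i : ι) :
    diagScale w x i = w i * x i :=
  rfl

variable [Fintype ι]

lemma inner_diagScale_left (w : ι → ℝ) (x y : EuclideanSpace ℝ ι) :
    ⟪diagScale w x, y⟫ = ⟪x, diagScale w y⟫ := by
  simp only [PiLp.inner_apply, diagScale_apply, RCLike.inner_apply, conj_trivial]
  exact Finset.sum_congr rfl fun i _ => by ring

lemma norm_diagScale_le {w : ι → ℝ} (hw : ∀ i, |w i| ≤ 1) (x : EuclideanSpace ℝ ι) :
    ‖diagScale w x‖ ≤ ‖x‖ := by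
  refine le_of_sq_le_sq ?_ (norm_nonneg x)
  simp only [EuclideanSpace.real_norm_sq_eq, diagScale_apply, mul_pow]
  exact Finset.sum_le_sum fun i _ =>
    mul_le_of_le_one_left (sq_nonneg _) ((sq_le_one_iff_abs_le_one _).2 (hw i))

end DiagScale

/-- The vector `(cos η, sin η / √n, …, sin η / √n)` of `ℝ^(n+1)`, at angle `η` from the first axis
towards the diagonal of the other `n` axes: `θ / r` for the all-ones sign pattern. For `n = 0` it is
`(cos η)`, so it lies in the unit ball but need not be a unit vector. -/
noncomputable def diagonalDirection (n : ℕ) (η : ℝ) : EuclideanSpace ℝ (Fin (n + 1)) :=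
  WithLp.toLp 2 (Fin.cons (Real.cos η) fun _ => Real.sin η / √n)

@[simp]
lemma diagonalDirection_zero (n : ℕ) (η : ℝ) : diagonalDirection n η 0 = Real.cos η :=
  rfl

@[simp]
lemma diagonalDirection_succ {n : ℕ} (η : ℝ) (j : Fin n) :
    diagonalDirection n η j.succ = Real.sin η / √n :=
  rfl

lemma norm_diagonalDirection_le_one (n : ℕ) (η : ℝ) : ‖diagonalDirection n η‖ ≤ 1 := by
  have tail_le : n * (Real.sin η / √n) ^ 2 ≤ Real.sin η ^ 2 := by
    rw [div_pow, Real.sq_sqrt n.cast_nonneg, mul_div_left_comm]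
    exact mul_le_of_le_one_right (sq_nonneg _) (div_self_le_one _)
  refine (sq_le_one_iff₀ (norm_nonneg _)).1 ?_
  calc ‖diagonalDirection n η‖ ^ 2
      = Real.cos η ^ 2 + n * (Real.sin η / √n) ^ 2 := by
        simp [EuclideanSpace.real_norm_sq_eq, Fin.sum_univ_succ]
    _ ≤ Real.cos η ^ 2 + Real.sin η ^ 2 := by gcongr
    _ = 1 := Real.cos_sq_add_sin_sq η

theorem stmt_2_general {n : ℕ} {r : ℝ} (hr : 0 ≤ r) (η : ℝ) {z : Fin n → ℝ}
    (hz : ∀ j, |z j| ≤ 1) {θ : EuclideanSpace ℝ (Fin (n + 1))}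
    (hθ0 : θ 0 = r * Real.cos η)
    (hθ : ∀ j : Fin n, θ j.succ = r * z j * Real.sin η / √n)
    {x : EuclideanSpace ℝ (Fin (n + 1))} (hx : ‖x‖ ≤ 1) :
    r / 2 * ∑ j : Fin n, (Real.sin η / √n - z j * x j.succ) ^ 2 ≤ r - ⟪x, θ⟫ := by
  let u := diagonalDirection n η
  let w : Fin (n + 1) → ℝ := Fin.cons 1 z
  have hw : ∀ i, |w i| ≤ 1 := Fin.cases (by simp [w]) hz
  have hθ_eq : θ = r • diagScale w u := by
    ext i
    cases i using Fin.cases with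
    | zero => simp [hθ0, u, w]
    | succ j => simp [hθ, u, w, mul_assoc, mul_div_assoc]
  calc r / 2 * ∑ j : Fin n, (Real.sin η / √n - z j * x j.succ) ^ 2
      ≤ r / 2 * ‖u - diagScale w x‖ ^ 2 := by
        gcongr
        exact sum_succ_sq_le_norm_sq (u - diagScale w x)
    _ ≤ r / 2 * (2 * (1 - ⟪diagScale w x, u⟫)) := by
        gcongr
        exact norm_sub_sq_le_two_mul_one_sub_inner (norm_diagonalDirection_le_one n η)
          ((norm_diagScale_le hw x).trans hx)
    _ = r - ⟪x, θ⟫ := by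
        rw [hθ_eq, real_inner_smul_right, inner_diagScale_left]
        ring

/-- Let `d ≥ 2`, let `r ≥ 0` and `η` be real, and let `z ∈ {−1, +1}^{d−1}`.  Define
`θ ∈ ℝ^d` by `θ₁ = r cos η` and `θ_ℓ = r z_{ℓ−1} (sin η)/√(d−1)` for `ℓ = 2, …, d`.
Then for every `x ∈ ℝ^d` with `‖x‖₂ ≤ 1`,
`r − ⟨x, θ⟩ ≥ (r/2) ∑_{ℓ=2}^d ((sin η)/√(d−1) − z_{ℓ−1} x_ℓ)²`. -/
theorem stmt_2 (d : ℕ) (hd : 2 ≤ d) (r : ℝ) (hr : 0 ≤ r) (η : ℝ) (z : Fin (d - 1) → ℝ)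
    (hz : ∀ j, z j = 1 ∨ z j = -1)
    (θ : EuclideanSpace ℝ (Fin d))
    (hθ0 : θ ⟨0, by omega⟩ = r * Real.cos η)
    (hθ : ∀ j : Fin (d - 1), θ ⟨j.val + 1, by have := j.isLt; omega⟩
        = r * z j * Real.sin η / Real.sqrt ((d : ℝ) - 1))
    (x : EuclideanSpace ℝ (Fin d)) (hx : ‖x‖ ≤ 1) :
    r / 2 * ∑ j : Fin (d - 1),
        (Real.sin η / Real.sqrt ((d : ℝ) - 1)
          - z j * x ⟨j.val + 1, by have := j.isLt; omega⟩) ^ 2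
      ≤ r - ⟪x, θ⟫ := by
  obtain ⟨n, rfl⟩ := Nat.exists_eq_add_of_le' (one_le_two.trans hd)
  have sub_one_eq : ((n + 1 : ℕ) : ℝ) - 1 = n := by simp
  rw [sub_one_eq] at hθ ⊢
  exact stmt_2_general hr η (fun j => by rcases hz j with h | h <;> simp [h]) hθ0 hθ hx
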